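/- Let (X_i)_{i≥1} be i.i.d. standard normal and X_{(n)} = max_{1≤i≤n} X_i. Let b_n > 0 satisfy 2π b_n² exp(b_n²) = n². Then, as n → ∞, sup_{x∈ℝ} |P(X_{(n)} ≤ b_n + x/b_n) - exp(-e^{-x})| = (d₁/(4 log n))(1 + o(1)), where d₁ = sup_{x∈ℝ} (x² + 2x + 2) exp(-e^{-x}) e^{-x}. -/

import Mathlib

open MeasureTheory Filter Real

/-- The standard normal cumulative distribution function. -/
noncomputable def stdNormalCDF (x : ℝ) : ℝ :=
  ∫ t in Set.Iic x, Real.exp (-t ^ 2 / 2) / Real.sqrt (2 * Real.pi)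

/-- The standard normal density. -/
noncomputable def stdNormalPDF (x : ℝ) : ℝ :=
  Real.exp (-x ^ 2 / 2) / Real.sqrt (2 * Real.pi)

/-- Scaling constant `a_n = √(2 log n)`. -/
noncomputable def aSeq (n : ℕ) : ℝ := Real.sqrt (2 * Real.log n)

/-- Centering constant
`b_n = √(2 log n) - (log log n + log (4π)) / (2 √(2 log n))`. -/
noncomputable def bSeq (n : ℕ) : ℝ :=
  aSeq n - (Real.log (Real.log n) + Real.log (4 * Real.pi)) / (2 * aSeq n)

/-- `c_n = log (√(4 π log n))`. -/
noncomputable def cSeq (n : ℕ) : ℝ := Real.log (Real.sqrt (4 * Real.pi * Real.log n))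

/-- The CDF of `Y_n = a_n (X_{(n)} - b_n)` where `X_{(n)}` is the maximum of `n`
i.i.d. standard normal random variables: `P(Y_n ≤ x) = Φ(b_n + x/a_n)^n`. -/
noncomputable def Fmax (n : ℕ) (x : ℝ) : ℝ := stdNormalCDF (bSeq n + x / aSeq n) ^ n

/-- The density of `Y_n = a_n (X_{(n)} - b_n)`:
`f_n(x) = n a_n⁻¹ φ(b_n + x/a_n) Φ(b_n + x/a_n)^{n-1}`. -/
noncomputable def fmax (n : ℕ) (x : ℝ) : ℝ :=
  n * (aSeq n)⁻¹ * stdNormalPDF (bSeq n + x / aSeq n) *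
    stdNormalCDF (bSeq n + x / aSeq n) ^ (n - 1)

/-- The density of the standard Gumbel distribution. -/
noncomputable def gumbelPDF (x : ℝ) : ℝ := Real.exp (-x - Real.exp (-x))

/-!
Put `c = 2 b_n²`. The equation for `b_n` says `φ(b_n) / b_n = 1 / n`, so completing the square gives
`Φ(b_n + x / b_n) = 1 - T_c(x) / n` with `T_c(x) = ∫_x^∞ exp (-t - t² / c) dt`. Replacing
`(1 - T_c / n)^n` by `exp (-T_c)` costs `O(1 / n)`, which is negligible against `1 / c`. Expanding
`exp (-t² / c)` gives `c (e^{-x} - T_c(x)) → ∫_x^∞ t² e^{-t} dt = (x² + 2x + 2) e^{-x}`, hence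
`c (exp (-T_c(x)) - Λ(x)) → (x² + 2x + 2) Λ(x) e^{-x}` pointwise, where `Λ(x) = exp (-e^{-x})`. As
`T_c(x) ≤ e^{-x}`, the difference is nonnegative, so for the suprema only an upper bound uniform in
`x` is needed: where `e^{-x} ≤ 2 log c` the limit profile is a bound up to a factor `1 + o(1)`, and
further to the left `exp (-T_c)` is at most its value at `-log (2 log c)`, where `Λ = 1 / c²`.
Finally `c ~ 4 log n`.
-/

open scoped Topology

section Suprema

/-- The uniform upper bound `u` rules out that the mass of the supremum escapes to infinity, which
pointwise convergence alone would allow. -/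
theorem tendsto_ciSup_of_tendsto_of_eventually_le {α ι β : Type*} [Nonempty ι]
    [ConditionallyCompleteLinearOrder β] [TopologicalSpace β] [OrderTopology β] {l : Filter α}
    {f : α → ι → β} {g : ι → β} {u : α → β} (hfg : ∀ i, Tendsto (f · i) l (𝓝 (g i)))
    (hfu : ∀ᶠ a in l, ∀ i, f a i ≤ u a) (hu : Tendsto u l (𝓝 (⨆ i, g i))) :
    Tendsto (fun a => ⨆ i, f a i) l (𝓝 (⨆ i, g i)) := by
  refine tendsto_order.2 ⟨fun y hy => ?_, fun y hy => ?_⟩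
  · obtain ⟨i, hi⟩ := exists_lt_of_lt_ciSup hy
    filter_upwards [(hfg i).eventually_const_lt hi, hfu] with a hya hle
    exact hya.trans_le (le_ciSup ⟨u a, Set.forall_mem_range.2 hle⟩ i)
  · filter_upwards [hu.eventually_lt_const hy, hfu] with a huy hle
    exact (ciSup_le hle).trans_lt huy

end Suprema

section Exponential

theorem tendsto_mul_sub_of_hasDerivAt {α : Type*} {l : Filter α} {f : ℝ → ℝ} {f' a v : ℝ}
    (hf : HasDerivAt f f' a) {c d : α → ℝ} (hc : Tendsto c l atTop)
    (hcd : Tendsto (fun i => c i * d i) l (𝓝 v)) :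
    Tendsto (fun i => c i * (f (a + d i) - f a)) l (𝓝 (v * f')) := by
  have hd : Tendsto d l (𝓝 0) := by
    refine (hcd.div_atTop hc).congr' ?_
    filter_upwards [hc.eventually_ne_atTop 0] with i hi using mul_div_cancel_left₀ _ hi
  simpa using hf.hasFDerivAt.hasFDerivWithinAt.lim (s := Set.univ) hd
    (Eventually.of_forall fun _ => Set.mem_univ _) hcd

theorem mul_one_sub_exp_neg_div_le {c s : ℝ} (hc : 0 ≤ c) (hs : 0 ≤ s) :
    c * (1 - exp (-(s / c))) ≤ s :=
  calc c * (1 - exp (-(s / c))) ≤ c * (s / c) := by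
        gcongr
        linarith [one_sub_le_exp_neg (s / c)]
    _ ≤ s := by
        rw [mul_div_left_comm]
        exact mul_le_of_le_one_right hs (div_self_le_one c)

theorem tendsto_mul_one_sub_exp_neg_div (s : ℝ) :
    Tendsto (fun c => c * (1 - exp (-(s / c)))) atTop (𝓝 s) := by
  have hcd : Tendsto (fun c : ℝ => c * -(s / c)) atTop (𝓝 (-s)) := by
    refine tendsto_const_nhds.congr' ?_
    filter_upwards [eventually_ne_atTop 0] with c hc
    field_simp
  have h := (tendsto_mul_sub_of_hasDerivAt (hasDerivAt_exp 0) tendsto_id hcd).neg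
  simpa [← mul_neg] using h

theorem sq_mul_exp_neg_le {t : ℝ} (ht : 0 ≤ t) : t ^ 2 * exp (-t) ≤ 2 := by
  have h := pow_div_factorial_le_exp t ht 2
  rw [exp_neg, ← div_eq_mul_inv, div_le_iff₀ (exp_pos t)]
  norm_num [Nat.factorial] at h
  linarith

/-- Bernoulli's inequality applied to `(1 - s ^ 2) ^ n = ((1 - s) * (1 + s)) ^ n`. -/
theorem exp_neg_mul_one_sub_le_one_sub_pow {s : ℝ} (h0 : 0 ≤ s) (h1 : s ≤ 1) (n : ℕ) :
    exp (-(n * s)) * (1 - n * s ^ 2) ≤ (1 - s) ^ n :=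
  calc exp (-(n * s)) * (1 - n * s ^ 2) ≤ exp (-(n * s)) * (1 - s ^ 2) ^ n := by
        gcongr
        simpa [sub_eq_add_neg] using one_add_mul_le_pow (a := -s ^ 2) (by nlinarith) n
    _ = exp (-(n * s)) * ((1 - s) ^ n * (s + 1) ^ n) := by rw [← mul_pow]; ring
    _ ≤ exp (-(n * s)) * ((1 - s) ^ n * exp s ^ n) := by
        gcongr
        exact add_one_le_exp s
    _ = (1 - s) ^ n := by
        rw [mul_left_comm, ← exp_nat_mul, ← exp_add, neg_add_cancel, exp_zero, mul_one]

theorem abs_one_sub_div_pow_sub_exp_neg_le {n : ℕ} (hn : n ≠ 0) {t : ℝ} (h0 : 0 ≤ t)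
    (ht : t ≤ n) : |(1 - t / n) ^ n - exp (-t)| ≤ 2 / n := by
  have hn' : (0 : ℝ) < n := by positivity
  have hupper : (1 - t / n) ^ n ≤ exp (-t) := one_sub_div_pow_le_exp_neg ht
  have hlower : exp (-t) - t ^ 2 * exp (-t) / n ≤ (1 - t / n) ^ n := by
    convert exp_neg_mul_one_sub_le_one_sub_pow (div_nonneg h0 hn'.le) ((div_le_one hn').2 ht) n
      using 1
    field_simp
  have hsq : t ^ 2 * exp (-t) / n ≤ 2 / n := by gcongr; exact sq_mul_exp_neg_le h0
  rw [abs_le]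
  constructor <;> linarith [div_nonneg zero_le_two hn'.le]

end Exponential

section IntegralsOverRays

theorem integral_comp_add_left_Ioi {E : Type*} [NormedAddCommGroup E] [NormedSpace ℝ E]
    (g : ℝ → E) (a b : ℝ) : ∫ t in Set.Ioi a, g (b + t) = ∫ t in Set.Ioi (b + a), g t := by
  simpa using (measurePreserving_add_left volume b).setIntegral_preimage_emb
    (measurableEmbedding_addLeft b) g (Set.Ioi (b + a))

theorem integrableOn_pow_mul_exp_neg_Ioi (k : ℕ) (x : ℝ) :
    IntegrableOn (fun t => t ^ k * exp (-t)) (Set.Ioi x) := by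
  refine integrable_of_isBigO_exp_neg (b := 1 / 2) (by norm_num) (by fun_prop) ?_
  refine ((isLittleO_pow_exp_pos_mul_atTop k one_half_pos).isBigO.mul
    (Asymptotics.isBigO_refl (fun t => exp (-t)) atTop)).congr_right fun t => ?_
  rw [← exp_add]
  ring_nf

theorem integral_pow_succ_mul_exp_neg_Ioi (k : ℕ) (x : ℝ) :
    ∫ t in Set.Ioi x, t ^ (k + 1) * exp (-t) =
      x ^ (k + 1) * exp (-x) + (k + 1) * ∫ t in Set.Ioi x, t ^ k * exp (-t) := by
  have hu (t : ℝ) : HasDerivAt (fun t => t ^ (k + 1)) ((k + 1) * t ^ k) t := by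
    simpa using hasDerivAt_pow (k + 1) t
  have hv (t : ℝ) : HasDerivAt (fun t => -exp (-t)) (exp (-t)) t := by
    simpa using (hasDerivAt_neg t).exp.fun_neg
  have hparts := integral_Ioi_mul_deriv_eq_deriv_mul (a := x) (fun t _ => hu t) (fun t _ => hv t)
    (integrableOn_pow_mul_exp_neg_Ioi (k + 1) x)
    (IntegrableOn.congr_fun ((integrableOn_pow_mul_exp_neg_Ioi k x).const_mul (-(k + 1 : ℝ)))
      (fun t _ => by simp only [Pi.mul_apply]; ring) measurableSet_Ioi)
    (((hu x).mul (hv x)).continuousAt.continuousWithinAt)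
    (by simpa [Pi.mul_def] using (tendsto_pow_mul_exp_neg_atTop_nhds_zero (k + 1)).neg)
  rw [hparts, ← integral_const_mul]
  simp [integral_neg, mul_assoc]

theorem integral_sq_mul_exp_neg_Ioi (x : ℝ) :
    ∫ t in Set.Ioi x, t ^ 2 * exp (-t) = (x ^ 2 + 2 * x + 2) * exp (-x) := by
  have h0 := integral_exp_neg_Ioi x
  have h1 := integral_pow_succ_mul_exp_neg_Ioi 0 x
  have h2 := integral_pow_succ_mul_exp_neg_Ioi 1 x
  norm_num [h0] at h1 h2
  rw [h2, h1]
  ring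

end IntegralsOverRays

section PerturbedTail

/-- The tail integral `T_c(x) = ∫_x^∞ exp (-t - t² / c) dt`, a perturbation of the exponential tail
`e^{-x}`. For `c = 2 b²` it is the Gaussian tail in the coordinate `b + x / b`, up to the factor
`φ(b) / b`. -/
noncomputable def perturbedExpTail (c x : ℝ) : ℝ :=
  ∫ t in Set.Ioi x, exp (-t - t ^ 2 / c)

variable {c : ℝ}

theorem exp_neg_sub_sq_div_le (hc : 0 ≤ c) (t : ℝ) : exp (-t - t ^ 2 / c) ≤ exp (-t) :=
  exp_le_exp.2 (sub_le_self _ (by positivity))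

theorem integrableOn_exp_neg_sub_sq_div (hc : 0 ≤ c) (x : ℝ) :
    IntegrableOn (fun t => exp (-t - t ^ 2 / c)) (Set.Ioi x) :=
  (integrableOn_exp_neg_Ioi x).mono' (by fun_prop)
    (ae_of_all _ fun t => by simpa using exp_neg_sub_sq_div_le hc t)

theorem perturbedExpTail_nonneg (c x : ℝ) : 0 ≤ perturbedExpTail c x :=
  integral_nonneg fun _ => (exp_pos _).le

theorem antitone_perturbedExpTail (hc : 0 ≤ c) : Antitone (perturbedExpTail c) := fun x _ hxy =>
  setIntegral_mono_set (integrableOn_exp_neg_sub_sq_div hc x) (ae_of_all _ fun _ => (exp_pos _).le)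
    (Set.Ioi_subset_Ioi hxy).eventuallyLE

theorem perturbedExpTail_le_exp_neg (hc : 0 ≤ c) (x : ℝ) : perturbedExpTail c x ≤ exp (-x) := by
  rw [← integral_exp_neg_Ioi x]
  exact integral_mono (integrableOn_exp_neg_sub_sq_div hc x) (integrableOn_exp_neg_Ioi x)
    (exp_neg_sub_sq_div_le hc)

theorem mul_exp_neg_sub_perturbedExpTail (hc : 0 ≤ c) (x : ℝ) :
    c * (exp (-x) - perturbedExpTail c x) =
      ∫ t in Set.Ioi x, c * (1 - exp (-(t ^ 2 / c))) * exp (-t) := by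
  rw [← integral_exp_neg_Ioi x, perturbedExpTail,
    ← integral_sub (integrableOn_exp_neg_Ioi x) (integrableOn_exp_neg_sub_sq_div hc x),
    ← integral_const_mul]
  congr 1 with t
  rw [sub_eq_add_neg (-t), exp_add]
  ring

theorem mul_one_sub_exp_neg_sq_div_mul_exp_neg_le (hc : 0 ≤ c) (t : ℝ) :
    c * (1 - exp (-(t ^ 2 / c))) * exp (-t) ≤ t ^ 2 * exp (-t) := by
  gcongr
  exact mul_one_sub_exp_neg_div_le hc (sq_nonneg t)

theorem mul_one_sub_exp_neg_sq_div_mul_exp_neg_nonneg (hc : 0 ≤ c) (t : ℝ) :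
    0 ≤ c * (1 - exp (-(t ^ 2 / c))) * exp (-t) := by
  have h : exp (-(t ^ 2 / c)) ≤ 1 := exp_le_one_iff.2 (neg_nonpos.2 (by positivity))
  exact mul_nonneg (mul_nonneg hc (sub_nonneg.2 h)) (exp_pos _).le

theorem mul_exp_neg_sub_perturbedExpTail_le (hc : 0 ≤ c) (x : ℝ) :
    c * (exp (-x) - perturbedExpTail c x) ≤ (x ^ 2 + 2 * x + 2) * exp (-x) := by
  rw [mul_exp_neg_sub_perturbedExpTail hc, ← integral_sq_mul_exp_neg_Ioi]
  exact integral_mono_of_nonneg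
    (ae_of_all _ (mul_one_sub_exp_neg_sq_div_mul_exp_neg_nonneg hc))
    (integrableOn_pow_mul_exp_neg_Ioi 2 x)
    (ae_of_all _ (mul_one_sub_exp_neg_sq_div_mul_exp_neg_le hc))

theorem tendsto_mul_exp_neg_sub_perturbedExpTail (x : ℝ) :
    Tendsto (fun c => c * (exp (-x) - perturbedExpTail c x)) atTop
      (𝓝 ((x ^ 2 + 2 * x + 2) * exp (-x))) := by
  rw [← integral_sq_mul_exp_neg_Ioi]
  have hdom : Tendsto (fun c : ℝ => ∫ t in Set.Ioi x, c * (1 - exp (-(t ^ 2 / c))) * exp (-t)) atTop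
      (𝓝 (∫ t in Set.Ioi x, t ^ 2 * exp (-t))) := by
    refine tendsto_integral_filter_of_dominated_convergence (fun t => t ^ 2 * exp (-t))
      (Eventually.of_forall fun c => by fun_prop) ?_ (integrableOn_pow_mul_exp_neg_Ioi 2 x)
      (ae_of_all _ fun t => (tendsto_mul_one_sub_exp_neg_div (t ^ 2)).mul_const _)
    filter_upwards [eventually_ge_atTop 0] with c hc
    refine ae_of_all _ fun t => ?_
    rw [norm_of_nonneg (mul_one_sub_exp_neg_sq_div_mul_exp_neg_nonneg hc t)]
    exact mul_one_sub_exp_neg_sq_div_mul_exp_neg_le hc t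
  refine hdom.congr' ?_
  filter_upwards [eventually_ge_atTop 0] with c hc
  exact (mul_exp_neg_sub_perturbedExpTail hc x).symm

end PerturbedTail

section GumbelComparison

/-- The standard Gumbel distribution function `Λ(x) = exp (-e^{-x})`. -/
noncomputable def gumbelCDF (x : ℝ) : ℝ := exp (-exp (-x))

/-- The first-order profile `(x² + 2x + 2) Λ(x) e^{-x}` of the difference between the distribution
of the normalized maximum and the Gumbel law; Hall's constant `d₁` is its supremum. -/
noncomputable def hallProfile (x : ℝ) : ℝ :=
  (x ^ 2 + 2 * x + 2) * exp (-exp (-x)) * exp (-x)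

theorem hallProfile_pos (x : ℝ) : 0 < hallProfile x := by
  have : 0 < x ^ 2 + 2 * x + 2 := by nlinarith [sq_nonneg (x + 1)]
  unfold hallProfile
  positivity

theorem sq_add_two_mul_add_two_le_two_mul_exp_abs (x : ℝ) :
    x ^ 2 + 2 * x + 2 ≤ 2 * exp |x| := by
  nlinarith [quadratic_le_exp_of_nonneg (abs_nonneg x), le_abs_self x, sq_abs x]

theorem sq_add_two_mul_add_two_mul_exp_neg_le {w x : ℝ} (hw : 1 ≤ w) (hx : exp (-x) ≤ w) :
    (x ^ 2 + 2 * x + 2) * exp (-x) ≤ 2 * w ^ 2 := by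
  have hmain : (x ^ 2 + 2 * x + 2) * exp (-x) ≤ 2 * exp (|x| - x) := by
    rw [sub_eq_add_neg, exp_add, ← mul_assoc]
    gcongr
    exact sq_add_two_mul_add_two_le_two_mul_exp_abs x
  refine hmain.trans (mul_le_mul_of_nonneg_left ?_ zero_le_two)
  rcases abs_cases x with ⟨h, -⟩ | ⟨h, -⟩
  · rw [h, sub_self, exp_zero]
    exact one_le_pow₀ hw
  · rw [h, sub_eq_add_neg, exp_add, ← sq]
    gcongr

theorem hallProfile_le_four (x : ℝ) : hallProfile x ≤ 4 := by
  have hq := sq_add_two_mul_add_two_mul_exp_neg_le (le_max_left 1 (exp (-x))) (le_max_right _ _)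
  have hexp : max 1 (exp (-x)) ^ 2 * exp (-exp (-x)) ≤ 2 := by
    rcases max_cases 1 (exp (-x)) with ⟨h, -⟩ | ⟨h, -⟩
    · have : exp (-exp (-x)) ≤ 1 := exp_le_one_iff.2 (neg_nonpos.2 (exp_pos _).le)
      rw [h]
      linarith
    · rw [h]
      exact sq_mul_exp_neg_le (exp_pos _).le
  calc hallProfile x = (x ^ 2 + 2 * x + 2) * exp (-x) * exp (-exp (-x)) := by
        unfold hallProfile; ring
    _ ≤ 2 * max 1 (exp (-x)) ^ 2 * exp (-exp (-x)) := by gcongr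
    _ ≤ 4 := by linarith

theorem bddAbove_range_hallProfile : BddAbove (Set.range hallProfile) :=
  ⟨4, Set.forall_mem_range.2 hallProfile_le_four⟩

theorem iSup_hallProfile_pos : 0 < ⨆ x, hallProfile x :=
  (hallProfile_pos 0).trans_le (le_ciSup bddAbove_range_hallProfile 0)

variable {c : ℝ}

theorem gumbelCDF_le_exp_neg_perturbedExpTail (hc : 0 ≤ c) (x : ℝ) :
    gumbelCDF x ≤ exp (-perturbedExpTail c x) :=
  exp_le_exp.2 (neg_le_neg (perturbedExpTail_le_exp_neg hc x))

theorem tendsto_mul_exp_neg_perturbedExpTail_sub_gumbelCDF (x : ℝ) :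
    Tendsto (fun c => c * (exp (-perturbedExpTail c x) - gumbelCDF x)) atTop
      (𝓝 (hallProfile x)) := by
  convert tendsto_mul_sub_of_hasDerivAt (hasDerivAt_exp (-exp (-x))) tendsto_id
    (tendsto_mul_exp_neg_sub_perturbedExpTail x) using 2
  · rw [gumbelCDF, id]
    ring_nf
  · unfold hallProfile
    ring

theorem mul_exp_neg_perturbedExpTail_sub_gumbelCDF_le_hallProfile_mul_exp (hc : 0 < c) (x : ℝ) :
    c * (exp (-perturbedExpTail c x) - gumbelCDF x) ≤
      hallProfile x * exp ((x ^ 2 + 2 * x + 2) * exp (-x) / c) := by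
  set T := perturbedExpTail c x
  set q := (x ^ 2 + 2 * x + 2) * exp (-x) with hq
  have hδ : c * (exp (-x) - T) ≤ q := mul_exp_neg_sub_perturbedExpTail_le hc.le x
  have hδ0 : 0 ≤ c * (exp (-x) - T) :=
    mul_nonneg hc.le (sub_nonneg.2 (perturbedExpTail_le_exp_neg hc.le x))
  have hgap : exp (-T) - gumbelCDF x ≤ exp (-T) * (exp (-x) - T) := by
    have hsplit : gumbelCDF x = exp (-T) * exp (-(exp (-x) - T)) := by
      rw [gumbelCDF, ← exp_add]; ring_nf
    rw [hsplit]
    nlinarith [one_sub_le_exp_neg (exp (-x) - T), exp_pos (-T)]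
  have hT : exp (-T) ≤ gumbelCDF x * exp (q / c) := by
    rw [gumbelCDF, ← exp_add, exp_le_exp]
    linarith [(le_div_iff₀' hc).2 hδ]
  calc c * (exp (-T) - gumbelCDF x) ≤ c * (exp (-T) * (exp (-x) - T)) := by gcongr
    _ = exp (-T) * (c * (exp (-x) - T)) := by ring
    _ ≤ gumbelCDF x * exp (q / c) * q :=
        mul_le_mul hT hδ hδ0 (mul_pos (exp_pos _) (exp_pos _)).le
    _ = hallProfile x * exp (q / c) := by rw [hq, gumbelCDF, hallProfile]; ring

theorem mul_exp_neg_perturbedExpTail_sub_gumbelCDF_le_iSup_mul_exp (hc : 0 < c) {w x : ℝ}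
    (hw : 1 ≤ w) (hx : exp (-x) ≤ w) :
    c * (exp (-perturbedExpTail c x) - gumbelCDF x) ≤
      (⨆ y, hallProfile y) * exp (2 * w ^ 2 / c) :=
  (mul_exp_neg_perturbedExpTail_sub_gumbelCDF_le_hallProfile_mul_exp hc x).trans <|
    mul_le_mul (le_ciSup bddAbove_range_hallProfile x)
      (exp_le_exp.2 <| div_le_div_of_nonneg_right
        (sq_add_two_mul_add_two_mul_exp_neg_le hw hx) hc.le)
      (exp_pos _).le iSup_hallProfile_pos.le

/-- To the left of the point `y` with `e^{-y} = w`, monotonicity in `x` reduces to that point, where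
`Λ(y) = e^{-w}`. -/
theorem mul_exp_neg_perturbedExpTail_sub_gumbelCDF_le_iSup_mul_exp_add (hc : 0 < c) {w : ℝ}
    (hw : 1 ≤ w) (x : ℝ) :
    c * (exp (-perturbedExpTail c x) - gumbelCDF x) ≤
      (⨆ y, hallProfile y) * exp (2 * w ^ 2 / c) + c * exp (-w) := by
  have hw0 : 0 < w := zero_lt_one.trans_le hw
  rcases le_total (exp (-x)) w with hx | hx
  · exact (mul_exp_neg_perturbedExpTail_sub_gumbelCDF_le_iSup_mul_exp hc hw hx).trans
      (le_add_of_nonneg_right (by positivity))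
  · have hy : exp (-(-log w)) = w := by rw [neg_neg, exp_log hw0]
    have hxy : x ≤ -log w := le_neg.1 ((log_le_iff_le_exp hw0).2 hx)
    have hT : exp (-perturbedExpTail c x) ≤ exp (-perturbedExpTail c (-log w)) :=
      exp_le_exp.2 (neg_le_neg (antitone_perturbedExpTail hc.le hxy))
    have hΛ : gumbelCDF (-log w) = exp (-w) := by rw [gumbelCDF, hy]
    calc c * (exp (-perturbedExpTail c x) - gumbelCDF x)
        ≤ c * (exp (-perturbedExpTail c (-log w)) - 0) := by
          gcongr
          exact (exp_pos _).le
      _ = c * (exp (-perturbedExpTail c (-log w)) - gumbelCDF (-log w)) + c * exp (-w) := by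
          rw [hΛ]; ring
      _ ≤ (⨆ y, hallProfile y) * exp (2 * w ^ 2 / c) + c * exp (-w) :=
          add_le_add (mul_exp_neg_perturbedExpTail_sub_gumbelCDF_le_iSup_mul_exp hc hw hy.le) le_rfl

theorem exists_tendsto_iSup_forall_mul_exp_neg_perturbedExpTail_sub_gumbelCDF_le :
    ∃ u : ℝ → ℝ, Tendsto u atTop (𝓝 (⨆ x, hallProfile x)) ∧
      ∀ᶠ c in atTop, ∀ x, c * (exp (-perturbedExpTail c x) - gumbelCDF x) ≤ u c := by
  -- `w = 2 log c` makes both `w ^ 2 / c` and `c * exp (-w) = 1 / c` vanish in the limit.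
  refine ⟨fun c => (⨆ y, hallProfile y) * exp (2 * (2 * log c) ^ 2 / c) + c * exp (-(2 * log c)),
    ?_, ?_⟩
  · have hlog : Tendsto (fun c => 2 * (2 * log c) ^ 2 / c) atTop (𝓝 0) := by
      convert (isLittleO_pow_log_id_atTop (n := 2)).tendsto_div_nhds_zero.const_mul 8 using 2
      · simp only [id_eq]; ring
      · simp
    have hinv : Tendsto (fun c => c * exp (-(2 * log c))) atTop (𝓝 0) := by
      refine tendsto_inv_atTop_zero.congr' ?_
      filter_upwards [eventually_gt_atTop 0] with c hc
      rw [two_mul, neg_add, exp_add, exp_neg, exp_log hc]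
      field_simp
    simpa using ((hlog.rexp.const_mul (⨆ y, hallProfile y)).add hinv)
  · filter_upwards [eventually_gt_atTop 0, tendsto_log_atTop.eventually_ge_atTop 1] with c hc hlog
    exact mul_exp_neg_perturbedExpTail_sub_gumbelCDF_le_iSup_mul_exp_add hc (by linarith)

end GumbelComparison

section StandardNormal

theorem stdNormalPDF_eq_gaussianPDFReal : stdNormalPDF = ProbabilityTheory.gaussianPDFReal 0 1 := by
  ext x
  simp [stdNormalPDF, ProbabilityTheory.gaussianPDFReal, div_eq_inv_mul]

theorem integrable_stdNormalPDF : Integrable stdNormalPDF := by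
  rw [stdNormalPDF_eq_gaussianPDFReal]
  exact ProbabilityTheory.integrable_gaussianPDFReal 0 1

theorem integral_stdNormalPDF : ∫ t, stdNormalPDF t = 1 := by
  rw [stdNormalPDF_eq_gaussianPDFReal]
  exact ProbabilityTheory.integral_gaussianPDFReal_eq_one 0 one_ne_zero

theorem stdNormalPDF_pos (x : ℝ) : 0 < stdNormalPDF x := by
  unfold stdNormalPDF
  positivity

theorem stdNormalCDF_nonneg (x : ℝ) : 0 ≤ stdNormalCDF x :=
  integral_nonneg fun t => (stdNormalPDF_pos t).le

theorem stdNormalCDF_eq_one_sub_integral_Ioi (x : ℝ) :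
    stdNormalCDF x = 1 - ∫ t in Set.Ioi x, stdNormalPDF t := by
  rw [← integral_stdNormalPDF, eq_sub_iff_add_eq]
  exact intervalIntegral.integral_Iic_add_Ioi integrable_stdNormalPDF.integrableOn
    integrable_stdNormalPDF.integrableOn

theorem stdNormalPDF_add_inv_mul {b : ℝ} (hb : b ≠ 0) (t : ℝ) :
    stdNormalPDF (b + b⁻¹ * t) = stdNormalPDF b * exp (-t - t ^ 2 / (2 * b ^ 2)) := by
  rw [stdNormalPDF, stdNormalPDF, div_mul_eq_mul_div, ← exp_add]
  congr 2
  field_simp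
  ring

theorem stdNormalCDF_add_div {b : ℝ} (hb : 0 < b) (x : ℝ) :
    stdNormalCDF (b + x / b) =
      1 - stdNormalPDF b / b * perturbedExpTail (2 * b ^ 2) x := by
  have htail : ∫ t in Set.Ioi (b + x / b), stdNormalPDF t =
      b⁻¹ * ∫ t in Set.Ioi x, stdNormalPDF (b + b⁻¹ * t) := by
    rw [integral_comp_mul_left_Ioi (fun t => stdNormalPDF (b + t)) x (inv_pos.2 hb),
      integral_comp_add_left_Ioi stdNormalPDF, smul_eq_mul, inv_inv, inv_mul_cancel_left₀ hb.ne',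
      inv_mul_eq_div]
  rw [stdNormalCDF_eq_one_sub_integral_Ioi, htail]
  simp_rw [stdNormalPDF_add_inv_mul hb.ne', integral_const_mul]
  rw [perturbedExpTail]
  ring

theorem tendsto_mul_stdNormalPDF_atTop : Tendsto (fun x => x * stdNormalPDF x) atTop (𝓝 0) := by
  have hexp : Tendsto (fun x : ℝ => exp (-(1 / 2) * x)) atTop (𝓝 0) :=
    tendsto_exp_atBot.comp (tendsto_id.const_mul_atTop_of_neg (by norm_num))
  have h := ((rpow_mul_exp_neg_mul_sq_isLittleO_exp_neg one_half_pos 1).trans_tendsto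
    hexp).div_const √(2 * π)
  rw [zero_div] at h
  refine h.congr fun x => ?_
  rw [rpow_one, stdNormalPDF]
  ring_nf

end StandardNormal

section NormingConstants

/-- `b` is the norming constant of Hall for the maximum of `n` standard normal variables: the
positive solution of `2π b² exp (b²) = n²`. The equation is `φ(b) / b = 1 / n` squared, so that
by Mills' ratio `b` is an approximate `1 / n` upper quantile. -/
def IsHallNorming (b : ℝ) (n : ℕ) : Prop :=
  0 < b ∧ 2 * π * b ^ 2 * exp (b ^ 2) = (n : ℝ) ^ 2

namespace IsHallNorming

variable {b : ℝ} {n : ℕ}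

theorem ne_zero (h : IsHallNorming b n) : n ≠ 0 := by
  rintro rfl
  have hpos : 0 < 2 * π * b ^ 2 * exp (b ^ 2) := by have := h.1; positivity
  simp [h.2] at hpos

theorem stdNormalPDF_div (h : IsHallNorming b n) : stdNormalPDF b / b = (n : ℝ)⁻¹ := by
  have hb := h.1
  refine (sq_eq_sq₀ (div_pos (stdNormalPDF_pos b) hb).le (inv_nonneg.2 n.cast_nonneg)).1 ?_
  rw [inv_pow, ← h.2, stdNormalPDF, div_pow, div_pow, sq_sqrt two_pi_pos.le, ← exp_nat_mul,
    show ((2 : ℕ) : ℝ) * (-b ^ 2 / 2) = -b ^ 2 by push_cast; ring, exp_neg]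
  field_simp

theorem two_mul_log (h : IsHallNorming b n) :
    2 * log n = log (2 * π) + log (b ^ 2) + b ^ 2 := by
  have hb := h.1
  have hlog := congr_arg log h.2
  rw [log_mul (by positivity) (exp_ne_zero _), log_mul (by positivity) (by positivity), log_exp,
    log_pow (n : ℝ) 2, Nat.cast_two] at hlog
  exact hlog.symm

theorem stdNormalCDF_add_div (h : IsHallNorming b n) (x : ℝ) :
    stdNormalCDF (b + x / b) = 1 - perturbedExpTail (2 * b ^ 2) x / n := by
  rw [_root_.stdNormalCDF_add_div h.1, h.stdNormalPDF_div, inv_mul_eq_div]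

theorem abs_stdNormalCDF_pow_sub_le (h : IsHallNorming b n) (x : ℝ) :
    |stdNormalCDF (b + x / b) ^ n - exp (-perturbedExpTail (2 * b ^ 2) x)| ≤ 2 / n := by
  have hn : (0 : ℝ) < n := by exact_mod_cast h.ne_zero.bot_lt
  have hT : perturbedExpTail (2 * b ^ 2) x ≤ n := by
    have h0 := stdNormalCDF_nonneg (b + x / b)
    rwa [h.stdNormalCDF_add_div, sub_nonneg, div_le_one hn] at h0
  rw [h.stdNormalCDF_add_div]
  exact abs_one_sub_div_pow_sub_exp_neg_le h.ne_zero (perturbedExpTail_nonneg _ x) hT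

end IsHallNorming

variable {b : ℕ → ℝ}

theorem tendsto_sq_atTop_of_isHallNorming (hb : ∀ᶠ n in atTop, IsHallNorming (b n) n) :
    Tendsto (fun n => b n ^ 2) atTop atTop := by
  have hlog : Tendsto (fun n : ℕ => log n - log (2 * π) / 2) atTop atTop :=
    tendsto_atTop_add_const_right _ _ (tendsto_log_atTop.comp tendsto_natCast_atTop_atTop)
  refine tendsto_atTop_mono' _ ?_ hlog
  filter_upwards [hb] with n h
  linarith [h.two_mul_log, log_le_self (sq_nonneg (b n))]

theorem tendsto_sq_div_atTop_of_isHallNorming (hb : ∀ᶠ n in atTop, IsHallNorming (b n) n) :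
    Tendsto (fun n => b n ^ 2 / n) atTop (𝓝 0) := by
  have hbtop : Tendsto b atTop atTop := by
    refine (tendsto_sqrt_atTop.comp (tendsto_sq_atTop_of_isHallNorming hb)).congr' ?_
    filter_upwards [hb] with n h using sqrt_sq h.1.le
  refine (tendsto_mul_stdNormalPDF_atTop.comp hbtop).congr' ?_
  filter_upwards [hb] with n h
  have := h.1.ne'
  rw [Function.comp_apply, div_eq_mul_inv, ← h.stdNormalPDF_div]
  field_simp

theorem tendsto_two_mul_log_div_sq_of_isHallNorming (hb : ∀ᶠ n in atTop, IsHallNorming (b n) n) :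
    Tendsto (fun n : ℕ => 2 * log n / b n ^ 2) atTop (𝓝 1) := by
  have hsq := tendsto_sq_atTop_of_isHallNorming hb
  have hconst : Tendsto (fun n => log (2 * π) / b n ^ 2) atTop (𝓝 0) := hsq.const_div_atTop _
  have hlog : Tendsto (fun n => log (b n ^ 2) / b n ^ 2) atTop (𝓝 0) :=
    isLittleO_log_id_atTop.tendsto_div_nhds_zero.comp hsq
  have hsum := (hconst.add hlog).add_const 1
  rw [add_zero, zero_add] at hsum
  refine hsum.congr' ?_
  filter_upwards [hb] with n h
  have := h.1.ne'
  rw [h.two_mul_log]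
  field_simp

end NormingConstants

section BerryEsseen

variable {b : ℕ → ℝ}

theorem tendsto_two_mul_sq_mul_abs_stdNormalCDF_pow_sub (hb : ∀ᶠ n in atTop, IsHallNorming (b n) n)
    (x : ℝ) :
    Tendsto (fun n => 2 * b n ^ 2 * |stdNormalCDF (b n + x / b n) ^ n - gumbelCDF x|) atTop
      (𝓝 (hallProfile x)) := by
  have hc : Tendsto (fun n => 2 * b n ^ 2) atTop atTop :=
    (tendsto_sq_atTop_of_isHallNorming hb).const_mul_atTop two_pos
  have herr : Tendsto (fun n => 2 * b n ^ 2 * (stdNormalCDF (b n + x / b n) ^ n -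
      exp (-perturbedExpTail (2 * b n ^ 2) x))) atTop (𝓝 0) := by
    have hbound := (tendsto_sq_div_atTop_of_isHallNorming hb).const_mul 4
    rw [mul_zero] at hbound
    refine squeeze_zero_norm' ?_ hbound
    filter_upwards [hb] with n h
    rw [norm_mul, norm_of_nonneg (by positivity), norm_eq_abs]
    calc _ ≤ 2 * b n ^ 2 * (2 / n) := by gcongr; exact h.abs_stdNormalCDF_pow_sub_le x
      _ = 4 * (b n ^ 2 / n) := by ring
  have hsum := herr.add ((tendsto_mul_exp_neg_perturbedExpTail_sub_gumbelCDF x).comp hc)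
  rw [zero_add] at hsum
  refine (abs_of_pos (hallProfile_pos x) ▸ hsum.abs).congr fun n => ?_
  rw [Function.comp_apply, ← mul_add, sub_add_sub_cancel, abs_mul, abs_of_nonneg (by positivity)]

theorem exists_tendsto_forall_mul_abs_stdNormalCDF_pow_sub_le
    (hb : ∀ᶠ n in atTop, IsHallNorming (b n) n) :
    ∃ u : ℕ → ℝ, Tendsto u atTop (𝓝 (⨆ x, hallProfile x)) ∧ ∀ᶠ n in atTop, ∀ x,
      2 * b n ^ 2 * |stdNormalCDF (b n + x / b n) ^ n - gumbelCDF x| ≤ u n := by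
  obtain ⟨u, hu, hle⟩ := exists_tendsto_iSup_forall_mul_exp_neg_perturbedExpTail_sub_gumbelCDF_le
  have hc : Tendsto (fun n => 2 * b n ^ 2) atTop atTop :=
    (tendsto_sq_atTop_of_isHallNorming hb).const_mul_atTop two_pos
  refine ⟨fun n => 4 * (b n ^ 2 / n) + u (2 * b n ^ 2), ?_, ?_⟩
  · simpa using ((tendsto_sq_div_atTop_of_isHallNorming hb).const_mul 4).add (hu.comp hc)
  · filter_upwards [hb, hc.eventually hle] with n h hlen x
    have hgap : 0 ≤ exp (-perturbedExpTail (2 * b n ^ 2) x) - gumbelCDF x :=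
      sub_nonneg.2 (gumbelCDF_le_exp_neg_perturbedExpTail (by positivity) x)
    calc 2 * b n ^ 2 * |stdNormalCDF (b n + x / b n) ^ n - gumbelCDF x|
        ≤ 2 * b n ^ 2 * (2 / n + (exp (-perturbedExpTail (2 * b n ^ 2) x) - gumbelCDF x)) := by
          gcongr
          refine (abs_sub_le _ (exp (-perturbedExpTail (2 * b n ^ 2) x)) _).trans ?_
          rw [abs_of_nonneg hgap]
          gcongr
          exact h.abs_stdNormalCDF_pow_sub_le x
      _ = 4 * (b n ^ 2 / n) +
          2 * b n ^ 2 * (exp (-perturbedExpTail (2 * b n ^ 2) x) - gumbelCDF x) := by ring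
      _ ≤ _ := by gcongr; exact hlen x

theorem tendsto_two_mul_sq_mul_iSup_abs_stdNormalCDF_pow_sub
    (hb : ∀ᶠ n in atTop, IsHallNorming (b n) n) :
    Tendsto (fun n => 2 * b n ^ 2 * ⨆ x, |stdNormalCDF (b n + x / b n) ^ n - gumbelCDF x|) atTop
      (𝓝 (⨆ x, hallProfile x)) := by
  obtain ⟨u, hu, hle⟩ := exists_tendsto_forall_mul_abs_stdNormalCDF_pow_sub_le hb
  refine (tendsto_ciSup_of_tendsto_of_eventually_le
    (tendsto_two_mul_sq_mul_abs_stdNormalCDF_pow_sub hb) hle hu).congr fun n => ?_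
  exact (mul_iSup_of_nonneg (by positivity) _).symm

end BerryEsseen

/-- Hall's Berry–Esseen bound made precise: if `b_n > 0` solves
`2π b_n² exp(b_n²) = n²`, then
`sup_x |P(X_{(n)} ≤ b_n + x/b_n) - exp(-e^{-x})| = (d₁/(4 log n)) (1 + o(1))`,
where `d₁ = sup_x (x² + 2x + 2) exp(-e^{-x}) e^{-x}`. -/
theorem hall_berryEsseen (b : ℕ → ℝ)
    (hb : ∀ n : ℕ, 1 ≤ n → 0 < b n ∧
      2 * Real.pi * (b n) ^ 2 * Real.exp ((b n) ^ 2) = (n : ℝ) ^ 2) :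
    Tendsto (fun n : ℕ =>
        (⨆ x : ℝ, |stdNormalCDF (b n + x / b n) ^ n - Real.exp (-Real.exp (-x))|) /
          ((⨆ x : ℝ, (x ^ 2 + 2 * x + 2) * Real.exp (-Real.exp (-x)) * Real.exp (-x)) /
            (4 * Real.log n)))
      atTop (nhds 1) := by
  have hnorm : ∀ᶠ n in atTop, IsHallNorming (b n) n := eventually_atTop.2 ⟨1, hb⟩
  have hsup := (tendsto_two_mul_sq_mul_iSup_abs_stdNormalCDF_pow_sub hnorm).div_const
    (⨆ x, hallProfile x)
  have hratio := hsup.mul (tendsto_two_mul_log_div_sq_of_isHallNorming hnorm)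
  rw [div_self iSup_hallProfile_pos.ne', one_mul] at hratio
  refine hratio.congr' ?_
  filter_upwards [hnorm] with n h
  have := h.1.ne'
  simp only [hallProfile, gumbelCDF]
  field_simp
  ring
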